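/- arXiv:1612.07607 — 3 statements merged into one kernel-verified Lean document; each statement's English description precedes it below -/
import Mathlib

section
/- Let ρ be a bipartite state on ℂ^{dA}⊗ℂ^{dB} with an orthonormal basis {α_a}_{a=1}^{dA} of ℂ^{dA}, linearly independent unit vectors β_1,…,β_{dA} in ℂ^{dB}, and p_a > 0 such that Tr_A[ρ(|α_a⟩⟨α_a|⊗I_B)] = p_a|β_a⟩⟨β_a| for every a. If ⟨α_i⊗β_i, ρ(α_j⊗β_j)⟩ ≠ 0 for some i ≠ j, then ρ is steerable from Alice's side for non-degenerate projective measurements (and in particular nonseparable). -/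
/-!
Suppose a local hidden state model exists. In the given basis `α` the conditional states are
multiples of the pure states `|β a⟩⟨β a|`, so each hidden state `σ ξ` of positive weight is
dominated by, hence supported on, a single line `ℂ β a`; concretely, `σ ξ` annihilates
`(β a)ᗮ` (`hidden_kills`).

Let `w` be dual to `β`, i.e. `⟨w k, β l⟩ = δ k l` (`exists_dual`). For `i ≠ j` the index `a` differs
from `i` or from `j`, so `⟨w i, σ ξ w j⟩ = 0` for all relevant `ξ`. Since the same hidden states
serve every basis, the sesquilinear form `f u v = ⟨u ⊗ w i, ρ (v ⊗ w j)⟩` vanishes on the diagonal,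
and by polarization `f (α i) (α j) = 0`. Finally `w k - β k` is orthogonal to `β k`, so positivity
of `ρ` gives `ρ (α k ⊗ w k) = ρ (α k ⊗ β k)`, and `f (α i) (α j)` is the cross term assumed nonzero.
-/

open scoped BigOperators Kronecker Classical ComplexOrder

namespace EPR

noncomputable section

/-- Complex inner product `⟨u, v⟩ = ∑ conj (u a) * v a` (conjugate-linear in the first slot). -/
def cinner {ι : Type*} [Fintype ι] (u v : ι → ℂ) : ℂ :=
  ∑ a, (starRingEnd ℂ) (u a) * v a

/-- `u` is a unit vector. -/
def IsUnitVec {ι : Type*} [Fintype ι] (u : ι → ℂ) : Prop := cinner u u = 1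

/-- Rank-one projection `|u⟩⟨u|`, with entries `u k * conj (u l)`. -/
def proj {ι : Type*} [Fintype ι] (u : ι → ℂ) : Matrix ι ι ℂ :=
  Matrix.of fun k l => u k * (starRingEnd ℂ) (u l)

/-- Rank-one operator `|u⟩⟨v|`, with entries `u k * conj (v l)`. -/
def outer {ι : Type*} [Fintype ι] (u v : ι → ℂ) : Matrix ι ι ℂ :=
  Matrix.of fun k l => u k * (starRingEnd ℂ) (v l)

/-- A state: positive semidefinite matrix of trace 1. -/
def IsState {ι : Type*} [Fintype ι] (ρ : Matrix ι ι ℂ) : Prop :=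
  ρ.PosSemidef ∧ ρ.trace = 1

/-- An effect: `0 ≤ E ≤ I` in the Loewner order. -/
def IsEffect {d : ℕ} (E : Matrix (Fin d) (Fin d) ℂ) : Prop :=
  E.PosSemidef ∧ (1 - E).PosSemidef

/-- Conditional state `Tr_A[ρ (E ⊗ I_B)]` of a bipartite state for an effect `E` on A:
entries `(E')_{b b'} = ∑_{a,a'} E_{a' a} ρ_{(a,b),(a',b')}`. -/
def condStateE {dA dB : ℕ} (ρ : Matrix (Fin dA × Fin dB) (Fin dA × Fin dB) ℂ)
    (E : Matrix (Fin dA) (Fin dA) ℂ) : Matrix (Fin dB) (Fin dB) ℂ :=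
  Matrix.of fun b b' => ∑ a, ∑ a', E a' a * ρ (a, b) (a', b')

/-- Conditional state `Tr_A[ρ (|α⟩⟨α| ⊗ I_B)]` for a non-degenerate projective effect:
entries `∑_{a,a'} conj (α a) * α a' * ρ_{(a,b),(a',b')}`. -/
def condState {dA dB : ℕ} (ρ : Matrix (Fin dA × Fin dB) (Fin dA × Fin dB) ℂ)
    (α : Fin dA → ℂ) : Matrix (Fin dB) (Fin dB) ℂ :=
  Matrix.of fun b b' => ∑ a, ∑ a', (starRingEnd ℂ) (α a) * α a' * ρ (a, b) (a', b')

/-- Tensor product vector `α ⊗ β` in `ℂ^{dA} ⊗ ℂ^{dB}`. -/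
def tensor2 {dA dB : ℕ} (α : Fin dA → ℂ) (β : Fin dB → ℂ) : Fin dA × Fin dB → ℂ :=
  fun p => α p.1 * β p.2

/-- Tensor product vector `α ⊗ β ⊗ γ` in `ℂ^{dA} ⊗ ℂ^{dB} ⊗ ℂ^{dC}`. -/
def tensor3 {dA dB dC : ℕ} (α : Fin dA → ℂ) (β : Fin dB → ℂ) (γ : Fin dC → ℂ) :
    Fin dA × Fin dB × Fin dC → ℂ :=
  fun p => α p.1 * β p.2.1 * γ p.2.2

/-- Reduced state of a tripartite pure state on AB:
`(ρ_Ψ)_{(a,b),(a',b')} = ∑_c Ψ_{a,b,c} conj (Ψ_{a',b',c})`. -/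
def reducedAB {dA dB dC : ℕ} (Ψ : Fin dA × Fin dB × Fin dC → ℂ) :
    Matrix (Fin dA × Fin dB) (Fin dA × Fin dB) ℂ :=
  Matrix.of fun p q => ∑ c, Ψ (p.1, p.2, c) * (starRingEnd ℂ) (Ψ (q.1, q.2, c))

/-- Partial contraction `⟨α|Ψ⟩ ∈ ℂ^{dB} ⊗ ℂ^{dC}`, with components
`∑_a conj (α a) Ψ_{a,b,c}`. -/
def aContract {dA dB dC : ℕ} (α : Fin dA → ℂ) (Ψ : Fin dA × Fin dB × Fin dC → ℂ) :
    Fin dB × Fin dC → ℂ :=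
  fun p => ∑ a, (starRingEnd ℂ) (α a) * Ψ (a, p.1, p.2)

/-- A family of vectors is orthonormal. For `n = d` this is an orthonormal basis of `ℂ^d`. -/
def OrthonormalFam {d n : ℕ} (α : Fin n → Fin d → ℂ) : Prop :=
  ∀ i j, cinner (α i) (α j) = if i = j then 1 else 0

/-- `ρ` is unsteerable from Alice's side for non-degenerate projective measurements:
there is a finite local-hidden-state ensemble reproducing all conditional states of
every non-degenerate projective measurement (orthonormal basis) on A. -/
def Unsteerable {dA dB : ℕ} (ρ : Matrix (Fin dA × Fin dB) (Fin dA × Fin dB) ℂ) : Prop :=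
  ∃ (n : ℕ) (P : Fin n → ℝ) (σ : Fin n → Matrix (Fin dB) (Fin dB) ℂ),
    (∀ ξ, 0 ≤ P ξ) ∧ (∑ ξ, P ξ = 1) ∧ (∀ ξ, IsState (σ ξ)) ∧
    ∀ α : Fin dA → Fin dA → ℂ, OrthonormalFam α →
      ∃ Q : Fin dA → Fin n → ℝ,
        (∀ a ξ, 0 ≤ Q a ξ ∧ Q a ξ ≤ 1) ∧ (∀ ξ, ∑ a, Q a ξ = 1) ∧
        ∀ a, condState ρ (α a) = ∑ ξ, ((Q a ξ * P ξ : ℝ) : ℂ) • σ ξ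

/-- `ρ` is separable: a finite convex-type combination of product states. -/
def Separable {dA dB : ℕ} (ρ : Matrix (Fin dA × Fin dB) (Fin dA × Fin dB) ℂ) : Prop :=
  ∃ (n : ℕ) (q : Fin n → ℝ) (ρA : Fin n → Matrix (Fin dA) (Fin dA) ℂ)
    (ρB : Fin n → Matrix (Fin dB) (Fin dB) ℂ),
    (∀ k, 0 ≤ q k) ∧ (∀ k, IsState (ρA k)) ∧ (∀ k, IsState (ρB k)) ∧
    ρ = ∑ k, ((q k : ℂ)) • (ρA k ⊗ₖ ρB k)

/-- A local hidden state model for an assemblage `As`, with outcomes `A`, measurement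
labels `X`, hidden states `σ` with weights `P`, and response probabilities `R`. -/
def LHSModel {dB : ℕ} {A X : Type*} [Fintype A] {n : ℕ}
    (As : A → X → Matrix (Fin dB) (Fin dB) ℂ)
    (P : Fin n → ℝ) (σ : Fin n → Matrix (Fin dB) (Fin dB) ℂ)
    (R : A → X → Fin n → ℝ) : Prop :=
  (∀ ξ, 0 ≤ P ξ) ∧ (∑ ξ, P ξ = 1) ∧ (∀ ξ, IsState (σ ξ)) ∧
  (∀ a x ξ, 0 ≤ R a x ξ ∧ R a x ξ ≤ 1) ∧ (∀ x ξ, ∑ a, R a x ξ = 1) ∧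
  (∀ a x, As a x = ∑ ξ, ((R a x ξ * P ξ : ℝ) : ℂ) • σ ξ)

/-- Standard basis vector of `ℂ^d`. -/
def stdb {d : ℕ} (a : Fin d) : Fin d → ℂ := fun i => if i = a then 1 else 0

theorem cinner_eq {ι : Type*} [Fintype ι] (u v : ι → ℂ) : cinner u v = star u ⬝ᵥ v := rfl

theorem cinner_condState {dA dB : ℕ} (ρ : Matrix (Fin dA × Fin dB) (Fin dA × Fin dB) ℂ)
    (γ : Fin dA → ℂ) (x y : Fin dB → ℂ) :
    cinner (tensor2 γ x) (ρ.mulVec (tensor2 γ y)) = cinner x ((condState ρ γ).mulVec y) := by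
  simp only [cinner, tensor2, condState, Matrix.mulVec, dotProduct, Fintype.sum_prod_type,
    Matrix.of_apply, Finset.mul_sum, Finset.sum_mul, map_mul]
  rw [Finset.sum_comm]
  refine Finset.sum_congr rfl fun b _ => ?_
  rw [Finset.sum_comm_cycle]
  refine Finset.sum_congr rfl fun b' _ => ?_
  refine Finset.sum_congr rfl fun a _ => ?_
  refine Finset.sum_congr rfl fun a' _ => ?_
  ring

theorem cinner_proj {d : ℕ} (β x y : Fin d → ℂ) (c : ℂ) :
    cinner x ((c • proj β).mulVec y) = c * cinner x β * cinner β y := by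
  have : (c • proj β).mulVec y = (c * cinner β y) • β := by
    ext k
    simp only [Matrix.mulVec, dotProduct, proj, cinner, Matrix.smul_apply, Matrix.of_apply,
      Pi.smul_apply, smul_eq_mul, Finset.mul_sum, Finset.sum_mul]
    exact Finset.sum_congr rfl fun _ _ => by ring
  rw [this, cinner_eq, dotProduct_smul, ← cinner_eq, smul_eq_mul]
  ring

theorem cinner_conj {ι : Type*} [Fintype ι] (u v : ι → ℂ) :
    cinner u v = star (cinner v u) := by
  simp [cinner, mul_comm]

/-- A linearly independent family has a dual family. -/
theorem exists_dual {m d : ℕ} (β : Fin m → Fin d → ℂ) (hind : LinearIndependent ℂ β) :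
    ∃ w : Fin m → Fin d → ℂ, ∀ k l, cinner (w k) (β l) = if k = l then 1 else 0 := by
  obtain ⟨g, hg⟩ := LinearMap.exists_leftInverse_of_injective (Fintype.linearCombination ℂ β)
    (LinearMap.ker_eq_bot.2 (linearIndependent_iff_injective_fintypeLinearCombination.1 hind))
  refine ⟨fun k b => star (g (Pi.single b 1) k), fun k l => ?_⟩
  have h1 : g (β l) = Pi.single l 1 := by
    have := LinearMap.congr_fun hg (Pi.single l 1)
    simpa using this
  have h2 : g (β l) k = ∑ b, β l b * g (Pi.single b 1) k := by
    conv_lhs => rw [pi_eq_sum_univ' (β l)]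
    simp [map_sum]
  simp only [cinner, starRingEnd_apply, star_star]
  rw [h1] at h2
  simp only [mul_comm]
  rw [← h2, Pi.single_apply]

/-- A unit vector is a member, at any prescribed position, of an orthonormal basis. -/
theorem exists_basis {d : ℕ} (i : Fin d) (γ : Fin d → ℂ) (hγ : cinner γ γ = 1) :
    ∃ α : Fin d → Fin d → ℂ, OrthonormalFam α ∧ α i = γ := by
  have key : ∀ u v : EuclideanSpace ℂ (Fin d), cinner u.ofLp v.ofLp = inner ℂ u v := by
    intro u v
    simp [cinner, PiLp.inner_apply, mul_comm]
  obtain ⟨b, hb⟩ := Orthonormal.exists_orthonormalBasis_extension_of_card_eq (𝕜 := ℂ)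
    (E := EuclideanSpace ℂ (Fin d)) (ι := Fin d) (by simp)
    (v := fun _ => WithLp.toLp 2 γ) (s := {i}) (by
      rw [orthonormal_iff_ite]
      rintro ⟨k, rfl⟩ ⟨l, rfl⟩
      simp only [Set.domRestrict_apply, if_true]
      rw [← key]
      exact hγ)
  refine ⟨fun k => (b k).ofLp, fun k l => ?_, ?_⟩
  · rw [key]
    exact orthonormal_iff_ite.1 b.orthonormal k l
  · simp [hb i rfl]

/-- If a nonnegative combination of positive semidefinite matrices has vanishing expectation
at `x`, then every term of nonzero weight annihilates `x`. -/
theorem hidden_kills {n d : ℕ} (c : Fin n → ℝ) (hc : ∀ ξ, 0 ≤ c ξ)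
    (σ : Fin n → Matrix (Fin d) (Fin d) ℂ) (hσ : ∀ ξ, (σ ξ).PosSemidef) (x : Fin d → ℂ)
    (h0 : cinner x ((∑ ξ, (c ξ : ℂ) • σ ξ).mulVec x) = 0) (ξ : Fin n) (hξ : c ξ ≠ 0) :
    (σ ξ).mulVec x = 0 := by
  rw [cinner_eq, Matrix.sum_mulVec, dotProduct_sum] at h0
  simp only [Matrix.smul_mulVec, dotProduct_smul, smul_eq_mul] at h0
  have hnn : ∀ η ∈ Finset.univ, 0 ≤ (c η : ℂ) * (star x ⬝ᵥ (σ η).mulVec x) := fun η _ =>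
    mul_nonneg (by exact_mod_cast hc η) ((hσ η).dotProduct_mulVec_nonneg x)
  have := (Finset.sum_eq_zero_iff_of_nonneg hnn).1 h0 ξ (Finset.mem_univ _)
  rcases mul_eq_zero.1 this with h | h
  · exact absurd (by exact_mod_cast h) hξ
  · exact ((hσ ξ).dotProduct_mulVec_zero_iff x).1 h

theorem cinner_mulVec_swap {ι : Type*} [Fintype ι] (A : Matrix ι ι ℂ) (hA : A.IsHermitian)
    (x y : ι → ℂ) : cinner x (A.mulVec y) = cinner (A.mulVec x) y := by
  rw [cinner_eq, cinner_eq, Matrix.star_mulVec, hA.eq, Matrix.dotProduct_mulVec]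

theorem tensor2_add_smul {dA dB : ℕ} (u v : Fin dA → ℂ) (c : ℂ) (x : Fin dB → ℂ) :
    tensor2 (u + c • v) x = tensor2 u x + c • tensor2 v x := by
  ext q; simp [tensor2]; ring

theorem tensor2_smul {dA dB : ℕ} (u : Fin dA → ℂ) (c : ℂ) (x : Fin dB → ℂ) :
    tensor2 (c • u) x = c • tensor2 u x := by
  ext q; simp [tensor2]; ring

/-- Polarization with the two combinations `u + v` and `u + i v`, for a sesquilinear form written
through a matrix. -/
theorem polarize {ι : Type*} [Fintype ι] (A : Matrix ι ι ℂ) (u v u' v' : ι → ℂ)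
    (huu : cinner u (A.mulVec u') = 0) (hvv : cinner v (A.mulVec v') = 0)
    (hc : ∀ c : ℂ, cinner (u + c • v) (A.mulVec (u' + c • v')) = 0) :
    cinner u (A.mulVec v') = 0 := by
  have h1 := hc 1
  have h2 := hc Complex.I
  simp only [cinner_eq, star_add, star_smul, Matrix.mulVec_add, Matrix.mulVec_smul,
    add_dotProduct, dotProduct_add, smul_dotProduct, dotProduct_smul, smul_eq_mul,
    one_smul] at *
  simp only [huu, hvv, Complex.star_def, Complex.conj_I] at h1 h2
  linear_combination (1/2) * h1 - (Complex.I / 2) * h2 +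
    (star u ⬝ᵥ A.mulVec v' - star v ⬝ᵥ A.mulVec u') / 2 * Complex.I_sq

/-- corollary, part (i): under the hypotheses of Theorem 2 of the paper,
if some off-diagonal matrix element `⟨α_i⊗β_i, ρ (α_j⊗β_j)⟩` with `i ≠ j` is nonzero,
then `ρ` is steerable. -/
theorem stmt15 {dA dB : ℕ} (ρ : Matrix (Fin dA × Fin dB) (Fin dA × Fin dB) ℂ)
    (hρ : IsState ρ)
    (α : Fin dA → Fin dA → ℂ) (hα : OrthonormalFam α)
    (β : Fin dA → Fin dB → ℂ) (hβ : ∀ a, IsUnitVec (β a))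
    (hind : LinearIndependent ℂ β)
    (p : Fin dA → ℝ) (hp : ∀ a, 0 < p a)
    (h : ∀ a, condState ρ (α a) = (p a : ℂ) • proj (β a))
    (hcross : ∃ i j, i ≠ j ∧
      cinner (tensor2 (α i) (β i)) (ρ.mulVec (tensor2 (α j) (β j))) ≠ 0) :
    ¬ Unsteerable ρ := by
  rintro ⟨n, P, σ, hP, -, hσ, hmod⟩
  obtain ⟨i, j, hij, hne⟩ := hcross
  obtain ⟨w, hw⟩ := exists_dual β hind
  have hw' : ∀ k l, cinner (β l) (w k) = if k = l then 1 else 0 := by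
    intro k l
    rw [cinner_conj, hw]
    split_ifs <;> simp
  obtain ⟨Q, hQ, hQ1, hQeq⟩ := hmod α hα
  have hσ0 : ∀ ξ, P ξ ≠ 0 → cinner (w i) ((σ ξ).mulVec (w j)) = 0 := by
    intro ξ hξ
    obtain ⟨a, ha⟩ : ∃ a, Q a ξ ≠ 0 := by
      by_contra! hcon
      simpa [hcon] using hQ1 ξ
    have kill : ∀ k, k ≠ a → (σ ξ).mulVec (w k) = 0 := by
      intro k hk
      refine hidden_kills (fun ξ => Q a ξ * P ξ) (fun η => mul_nonneg (hQ a η).1 (hP η)) σ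
        (fun η => (hσ η).1) (w k) ?_ ξ (mul_ne_zero ha hξ)
      rw [← hQeq a, h a, cinner_proj, hw, if_neg hk]
      ring
    by_cases hja : j = a
    · rw [cinner_mulVec_swap _ (hσ ξ).1.isHermitian, kill i (fun e => hij (e.trans hja.symm))]
      simp [cinner]
    · rw [kill j hja]
      simp [cinner]
  have hunit : ∀ γ : Fin dA → ℂ, cinner γ γ = 1 →
      cinner (tensor2 γ (w i)) (ρ.mulVec (tensor2 γ (w j))) = 0 := by
    intro γ hγ
    obtain ⟨α', hα', rfl⟩ := exists_basis i γ hγ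
    obtain ⟨Q', -, -, hQ'⟩ := hmod α' hα'
    rw [cinner_condState, hQ' i, cinner_eq, Matrix.sum_mulVec, dotProduct_sum]
    refine Finset.sum_eq_zero fun ξ _ => ?_
    rw [Matrix.smul_mulVec, dotProduct_smul, ← cinner_eq]
    by_cases hξ : P ξ = 0
    · simp [hξ]
    · simp [hσ0 ξ hξ]
  have hall : ∀ γ : Fin dA → ℂ,
      cinner (tensor2 γ (w i)) (ρ.mulVec (tensor2 γ (w j))) = 0 := by
    intro γ
    by_cases hγ : γ = 0
    · subst hγ
      simp [cinner, tensor2]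
    have hpos : 0 < cinner γ γ := by
      rw [cinner_eq]
      exact Matrix.dotProduct_star_self_pos_iff.2 hγ
    obtain ⟨r, hr, hrγ⟩ : ∃ r : ℝ, 0 < r ∧ (r : ℂ) = cinner γ γ :=
      RCLike.pos_iff_exists_ofReal.1 hpos
    have hs : ((Real.sqrt r : ℝ) : ℂ) * (Real.sqrt r : ℝ) = r := by
      exact_mod_cast Real.mul_self_sqrt hr.le
    have hs0 : ((Real.sqrt r : ℝ) : ℂ) ≠ 0 := by
      exact_mod_cast (Real.sqrt_pos.2 hr).ne'
    have := hunit (((Real.sqrt r : ℝ) : ℂ)⁻¹ • γ) (by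
      simp only [cinner_eq, star_smul, smul_dotProduct, dotProduct_smul, smul_eq_mul]
      rw [← cinner_eq, ← hrγ, ← hs]
      simp only [Complex.star_def, map_inv₀, Complex.conj_ofReal]
      field_simp)
    simp only [tensor2_smul, cinner_eq, star_smul, smul_dotProduct, dotProduct_smul,
      Matrix.mulVec_smul, smul_eq_mul] at this
    simpa [hs0, cinner_eq] using this
  -- `w k - β k` is orthogonal to `β k`, so `ρ` does not distinguish `α k ⊗ w k` and `α k ⊗ β k`.
  have hρw : ∀ k, ρ.mulVec (tensor2 (α k) (w k)) = ρ.mulVec (tensor2 (α k) (β k)) := by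
    intro k
    have horth : cinner (β k) (w k - β k) = 0 := by
      have h1 := hw' k k
      have h2 : cinner (β k) (β k) = 1 := hβ k
      rw [cinner_eq] at *
      rw [dotProduct_sub, h1, h2]
      simp
    have hz : ρ.mulVec (tensor2 (α k) (w k - β k)) = 0 := by
      rw [← hρ.1.dotProduct_mulVec_zero_iff, ← cinner_eq, cinner_condState, h k, cinner_proj,
        horth, mul_zero]
    have hsub : tensor2 (α k) (w k - β k) = tensor2 (α k) (w k) - tensor2 (α k) (β k) := by
      ext q; simp [tensor2]; ring
    rw [hsub, Matrix.mulVec_sub] at hz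
    exact sub_eq_zero.1 hz
  apply hne
  rw [← hρw j, cinner_mulVec_swap _ hρ.1.isHermitian, ← hρw i,
    ← cinner_mulVec_swap _ hρ.1.isHermitian]
  refine polarize ρ _ (tensor2 (α j) (w i)) (tensor2 (α i) (w j)) _ (hall _) (hall _) fun c => ?_
  rw [← tensor2_add_smul, ← tensor2_add_smul]
  exact hall _

end

end EPR
end

section
/- Let ρ be a bipartite state on ℂ^{dA}⊗ℂ^{dB} with an orthonormal basis {α_a}_{a=1}^{dA} of ℂ^{dA}, linearly independent unit vectors β_1,…,β_{dA} in ℂ^{dB}, and p_a > 0 such that Tr_A[ρ(|α_a⟩⟨α_a|⊗I_B)] = p_a|β_a⟩⟨β_a| for every a. If ⟨α_i⊗β_i, ρ(α_j⊗β_j)⟩ = 0 for all i ≠ j, then ρ = Σ_{a=1}^{dA} p_a |α_a⊗β_a⟩⟨α_a⊗β_a|; in particular ρ is separable. -/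
/-!
The product vectors `e a = α a ⊗ β a` are orthonormal, and `⟨e a, ρ (e a)⟩ = p a`, since this
expectation is `⟨β a, condState ρ (α a) (β a)⟩`. As `α` is an orthonormal basis, the conditional
states carry the whole trace of `ρ`, so `∑ a, p a = Tr ρ`. Hence `ρ` and its compression to the
span of the `e a` have the same trace; positivity then forces `ρ` to be supported on that span
(`eq_of_trace_compression`). There the matrix of `ρ` in the basis `e` is diagonal with entries
`p a`: the off-diagonal elements vanish by hypothesis.
-/

open scoped BigOperators Kronecker Classical ComplexOrder

namespace EPR

noncomputable section

/-- Expectation of `ρ` in a product vector, computed through the conditional state. -/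
lemma cinner_tensor2_mulVec {dA dB : ℕ} (ρ : Matrix (Fin dA × Fin dB) (Fin dA × Fin dB) ℂ)
    (α : Fin dA → ℂ) (β : Fin dB → ℂ) :
    cinner (tensor2 α β) (ρ.mulVec (tensor2 α β)) = cinner β ((condState ρ α).mulVec β) := by
  simp only [cinner, tensor2, condState, Matrix.mulVec, dotProduct, Matrix.of_apply,
    Fintype.sum_prod_type, Finset.mul_sum, Finset.sum_mul, map_mul]
  rw [Finset.sum_comm]
  refine Finset.sum_congr rfl fun b _ => ?_
  conv_rhs => rw [Finset.sum_comm]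
  refine Finset.sum_congr rfl fun a _ => ?_
  conv_rhs => rw [Finset.sum_comm]
  refine Finset.sum_congr rfl fun a' _ => ?_
  refine Finset.sum_congr rfl fun b' _ => ?_
  ring

lemma cinner_tensor2 {dA dB : ℕ} (α α' : Fin dA → ℂ) (β β' : Fin dB → ℂ) :
    cinner (tensor2 α β) (tensor2 α' β') = cinner α α' * cinner β β' := by
  simp only [cinner, tensor2, Fintype.sum_prod_type, Finset.sum_mul_sum, map_mul]
  refine Finset.sum_congr rfl fun a _ => Finset.sum_congr rfl fun b _ => ?_
  ring

lemma proj_mulVec_self {ι : Type*} [Fintype ι] (u : ι → ℂ) (hu : IsUnitVec u) :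
    (proj u).mulVec u = u := by
  ext k
  simp only [IsUnitVec, cinner] at hu
  simp only [proj, Matrix.mulVec, dotProduct, Matrix.of_apply, mul_assoc]
  rw [← Finset.mul_sum, hu, mul_one]

lemma trace_proj {ι : Type*} [Fintype ι] (u : ι → ℂ) : (proj u).trace = cinner u u := by
  simp [proj, cinner, Matrix.trace, mul_comm]

lemma isState_proj {ι : Type*} [Fintype ι] (u : ι → ℂ) (hu : IsUnitVec u) :
    IsState (proj u) := by
  refine ⟨?_, (trace_proj u).trans hu⟩
  have : proj u = Matrix.vecMulVec u (star u) := by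
    ext k l
    simp [proj, Matrix.vecMulVec_apply]
  rw [this]
  exact Matrix.posSemidef_vecMulVec_self_star u

/-- Completeness relation `∑ i, |α i⟩⟨α i| = 1` of an orthonormal basis, entrywise. -/
lemma OrthonormalFam.sum_conj_mul {d : ℕ} {α : Fin d → Fin d → ℂ} (hα : OrthonormalFam α)
    (a a' : Fin d) :
    ∑ i, (starRingEnd ℂ) (α i a) * α i a' = if a = a' then 1 else 0 := by
  set U : Matrix (Fin d) (Fin d) ℂ := Matrix.of fun a i => α i a with hU
  have h1 : U.conjTranspose * U = 1 := by
    ext i j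
    simpa [hU, Matrix.mul_apply, Matrix.one_apply, cinner] using hα i j
  have h3 : U * U.conjTranspose = 1 := mul_eq_one_comm.mp h1
  have h2 := congrFun₂ h3 a' a
  simpa [hU, Matrix.mul_apply, Matrix.one_apply, mul_comm, eq_comm] using h2

/-- The conditional states of a measurement in an orthonormal basis carry the whole trace. -/
lemma sum_trace_condState {dA dB : ℕ} (ρ : Matrix (Fin dA × Fin dB) (Fin dA × Fin dB) ℂ)
    {α : Fin dA → Fin dA → ℂ} (hα : OrthonormalFam α) :
    ∑ i, (condState ρ (α i)).trace = ρ.trace := by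
  simp only [condState, Matrix.trace, Matrix.diag_apply, Matrix.of_apply, Fintype.sum_prod_type]
  rw [Finset.sum_comm]
  conv_rhs => rw [Finset.sum_comm]
  refine Finset.sum_congr rfl fun b _ => ?_
  rw [Finset.sum_comm]
  refine Finset.sum_congr rfl fun a _ => ?_
  rw [Finset.sum_comm]
  simp [← Finset.sum_mul, hα.sum_conj_mul]

open scoped MatrixOrder Matrix.Norms.L2Operator in
/-- If the compression `Vᴴ ρ V` of a positive semidefinite `ρ` along an isometry `V` has the
same trace as `ρ`, then `ρ` is supported on the range of `V`: writing `ρ = Bᴴ B` and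
`Q = 1 - V Vᴴ`, the trace of `(B Q)ᴴ (B Q)` vanishes, hence `B Q = 0`. -/
lemma eq_of_trace_compression {m n : Type*} [Fintype m] [Fintype n] [DecidableEq n]
    {ρ : Matrix m m ℂ} (hρ : ρ.PosSemidef) (V : Matrix m n ℂ)
    (hV : V.conjTranspose * V = 1)
    (htr : (V.conjTranspose * ρ * V).trace = ρ.trace) :
    ρ = V * (V.conjTranspose * ρ * V) * V.conjTranspose := by
  obtain ⟨B, hB⟩ := CStarAlgebra.nonneg_iff_eq_star_mul_self.mp hρ.nonneg
  rw [Matrix.star_eq_conjTranspose] at hB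
  set P := V * V.conjTranspose with hP
  have hPH : P.conjTranspose = P := by simp [hP]
  have hPP : P * P = P := by
    rw [hP, Matrix.mul_assoc, ← Matrix.mul_assoc V.conjTranspose, hV, Matrix.one_mul]
  have hQQ : (1 - P) * (1 - P) = 1 - P := by
    simp [Matrix.mul_sub, Matrix.sub_mul, hPP]
  have hBQ : B * (1 - P) = 0 := by
    rw [← Matrix.trace_conjTranspose_mul_self_eq_zero_iff, Matrix.conjTranspose_mul,
      Matrix.conjTranspose_sub, Matrix.conjTranspose_one, hPH, Matrix.mul_assoc,
      ← Matrix.mul_assoc B.conjTranspose, ← hB, Matrix.trace_mul_comm, Matrix.mul_assoc, hQQ,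
      Matrix.mul_sub, Matrix.mul_one, Matrix.trace_sub, ← htr, hP, ← Matrix.mul_assoc,
      Matrix.trace_mul_comm (ρ * V), Matrix.mul_assoc, sub_self]
  have hρP : ρ * P = ρ := by
    have : ρ * (1 - P) = 0 := by rw [hB, Matrix.mul_assoc, hBQ, Matrix.mul_zero]
    rw [Matrix.mul_sub, Matrix.mul_one, sub_eq_zero] at this
    exact this.symm
  have hPρ : P * ρ = ρ := by
    have := congrArg Matrix.conjTranspose hρP
    rwa [Matrix.conjTranspose_mul, hPH, hρ.isHermitian.eq] at this
  calc ρ = P * ρ * P := by rw [hPρ, hρP]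
    _ = _ := by simp only [hP, Matrix.mul_assoc]

/-- corollary, part (ii): under the hypotheses of Theorem 2 of the
paper, if all off-diagonal matrix elements `⟨α_i⊗β_i, ρ (α_j⊗β_j)⟩` with `i ≠ j`
vanish, then `ρ = ∑_a p_a |α_a⊗β_a⟩⟨α_a⊗β_a|` and is separable. -/
theorem stmt16 {dA dB : ℕ} (ρ : Matrix (Fin dA × Fin dB) (Fin dA × Fin dB) ℂ)
    (hρ : IsState ρ)
    (α : Fin dA → Fin dA → ℂ) (hα : OrthonormalFam α)
    (β : Fin dA → Fin dB → ℂ) (hβ : ∀ a, IsUnitVec (β a))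
    (hind : LinearIndependent ℂ β)
    (p : Fin dA → ℝ) (hp : ∀ a, 0 < p a)
    (h : ∀ a, condState ρ (α a) = (p a : ℂ) • proj (β a))
    (hdiag : ∀ i j, i ≠ j →
      cinner (tensor2 (α i) (β i)) (ρ.mulVec (tensor2 (α j) (β j))) = 0) :
    ρ = (∑ a, ((p a : ℂ)) • proj (tensor2 (α a) (β a))) ∧ Separable ρ := by
  -- the isometry whose columns are the vectors `α a ⊗ β a`
  set V : Matrix (Fin dA × Fin dB) (Fin dA) ℂ :=
    Matrix.of fun x a => tensor2 (α a) (β a) x with hVdef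
  have hV : V.conjTranspose * V = 1 := by
    ext i j
    have h1 := cinner_tensor2 (α i) (α j) (β i) (β j)
    rw [hα i j] at h1
    have h2 : (V.conjTranspose * V) i j = cinner (tensor2 (α i) (β i)) (tensor2 (α j) (β j)) := by
      simp [hVdef, Matrix.mul_apply, cinner]
    rw [h2, h1, Matrix.one_apply]
    split_ifs with hij
    · subst hij
      rw [one_mul]
      exact hβ i
    · rw [zero_mul]
  have hcomp : V.conjTranspose * ρ * V = Matrix.diagonal fun a => (p a : ℂ) := by
    ext i j
    have h2 : (V.conjTranspose * ρ * V) i j =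
        cinner (tensor2 (α i) (β i)) (ρ.mulVec (tensor2 (α j) (β j))) := by
      rw [Matrix.mul_assoc]
      simp [hVdef, Matrix.mul_apply, cinner, Matrix.mulVec, dotProduct]
    rw [h2]
    by_cases hij : i = j
    · subst hij
      rw [cinner_tensor2_mulVec, h, Matrix.smul_mulVec, proj_mulVec_self _ (hβ i),
        Matrix.diagonal_apply_eq]
      have h3 := hβ i
      simp only [IsUnitVec, cinner] at h3
      simp only [cinner, Pi.smul_apply, smul_eq_mul, mul_left_comm _ (p i : ℂ)]
      rw [← Finset.mul_sum, h3, mul_one]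
    · rw [hdiag i j hij, Matrix.diagonal_apply_ne _ hij]
  have htr : (V.conjTranspose * ρ * V).trace = ρ.trace := by
    rw [hcomp, Matrix.trace_diagonal, ← sum_trace_condState ρ hα]
    refine Finset.sum_congr rfl fun a _ => ?_
    rw [h, Matrix.trace_smul, trace_proj, hβ a, smul_eq_mul, mul_one]
  have hmain : ρ = ∑ a, ((p a : ℂ)) • proj (tensor2 (α a) (β a)) := by
    refine (eq_of_trace_compression hρ.1 V hV htr).trans ?_
    rw [hcomp]
    ext x y
    rw [Matrix.mul_apply, Matrix.sum_apply]
    refine Finset.sum_congr rfl fun a _ => ?_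
    simp [hVdef, Matrix.mul_diagonal, proj]
    ring
  refine ⟨hmain, dA, p, fun a => proj (α a), fun a => proj (β a), fun a => (hp a).le,
    fun a => isState_proj _ ?_, fun a => isState_proj _ (hβ a), hmain.trans ?_⟩
  · simpa [IsUnitVec] using hα a a
  · refine Finset.sum_congr rfl fun a _ => ?_
    congr 1
    ext x y
    simp [proj, tensor2, Matrix.kroneckerMap_apply]
    ring

end

end EPR
end

section
/- Let Ψ be a unit vector in ℂ^{dA}⊗ℂ^{dB} (with dA, dB ≥ 2) that is not a product vector, i.e. Ψ ≠ α⊗β for all α ∈ ℂ^{dA}, β ∈ ℂ^{dB}. Then the pure bipartite state ρ = |Ψ⟩⟨Ψ| is steerable from Alice's side for non-degenerate projective measurements: it admits no local hidden state model. -/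
/-!
An ensemble has only finitely many hidden states, while an entangled pure state produces infinitely
many pure conditional states.

The conditional state of `|Ψ⟩⟨Ψ|` for a unit vector `α` is `|v⟩⟨v|` with
`v = ∑ a, conj (α a) • Ψ (a, ·)`. If positive multiples of states `σ ξ` add up to `|v⟩⟨v|`, every
`σ ξ` that really contributes annihilates the vectors orthogonal to `v` (`exists_hidden_state`).
Since `Ψ` is not a product vector, its coefficient matrix has a nonzero `2 × 2` minor, on rows
`a₁, a₂` and columns `b₀, b₁` (`exists_minor_ne_zero`). The vectors `e_{a₁} + t e_{a₂}`, `t : ℕ`,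
then give the pairwise non-parallel vectors `Ψ (a₁, ·) + t Ψ (a₂, ·)`. By the pigeonhole
principle two values of `t` share a hidden state `σ ξ`; its columns `b₀` and `b₁` are killed by
two independent linear relations, hence vanish, although `σ ξ` was chosen with a nonzero diagonal
entry at `b₀` or `b₁`.
-/

open scoped BigOperators Kronecker Classical ComplexOrder

namespace EPR

noncomputable section

/-- The partial contraction `⟨α|Ψ⟩ ∈ ℂ^{dB}`, with components `∑ a, conj (α a) * Ψ (a, b)`. -/
def contract {dA dB : ℕ} (α : Fin dA → ℂ) (Ψ : Fin dA × Fin dB → ℂ) : Fin dB → ℂ :=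
  fun b => ∑ a, (starRingEnd ℂ) (α a) * Ψ (a, b)

lemma condState_proj {dA dB : ℕ} (Ψ : Fin dA × Fin dB → ℂ) (α : Fin dA → ℂ) :
    condState (proj Ψ) α = proj (contract α Ψ) := by
  ext b b'
  simp only [condState, proj, contract, Matrix.of_apply, map_sum, map_mul, Complex.conj_conj,
    Finset.sum_mul_sum]
  refine Finset.sum_congr rfl fun a _ => Finset.sum_congr rfl fun a' _ => ?_
  ring

lemma exists_minor_ne_zero {dA dB : ℕ} (Ψ : Fin dA × Fin dB → ℂ)
    (hprod : ∀ (α : Fin dA → ℂ) (β : Fin dB → ℂ), Ψ ≠ tensor2 α β) :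
    ∃ a₁ a₂ b₀ b₁, Ψ (a₁, b₀) * Ψ (a₂, b₁) - Ψ (a₁, b₁) * Ψ (a₂, b₀) ≠ 0 := by
  by_contra! h
  by_cases h0 : ∃ a₁ b₀, Ψ (a₁, b₀) ≠ 0
  · obtain ⟨a₁, b₀, hx⟩ := h0
    refine hprod (fun a => Ψ (a, b₀) / Ψ (a₁, b₀)) (fun b => Ψ (a₁, b)) ?_
    funext ⟨a, b⟩
    simp only [tensor2]
    field_simp
    linear_combination h a₁ a b₀ b
  · push Not at h0
    refine hprod 0 0 ?_
    funext ⟨a, b⟩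
    simp [tensor2, h0]

/-- Every unit vector is a member of some orthonormal basis. -/
lemma exists_orthonormalFam {d : ℕ} (i₀ : Fin d) (u : EuclideanSpace ℂ (Fin d)) (hu : ‖u‖ = 1) :
    ∃ α : Fin d → Fin d → ℂ, OrthonormalFam α ∧ ∀ i, α i₀ i = u i := by
  have hv : Orthonormal ℂ (({i₀} : Set (Fin d)).domRestrict fun _ => u) := by
    refine ⟨fun _ => hu, fun i j hij => ?_⟩
    exact absurd (Subsingleton.elim i j) hij
  obtain ⟨b, hb⟩ := hv.exists_orthonormalBasis_extension_of_card_eq (by simp)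
  refine ⟨fun i k => b i k, fun i j => ?_, fun i => by simp only [hb i₀ rfl]⟩
  rw [← orthonormal_iff_ite.mp b.orthonormal i j]
  simp [cinner, PiLp.inner_apply, mul_comm]

/-- If nonnegative multiples of positive semidefinite matrices add up to `|v⟩⟨v|` and `v` is
nonzero at `b₀` or `b₁`, then some `σ ξ` has a nonzero diagonal entry at `b₀` or `b₁` and
annihilates the vector `conj (v b₁) e_{b₀} - conj (v b₀) e_{b₁}`, which is orthogonal to `v`. -/
lemma exists_hidden_state {d n : ℕ} (v : Fin d → ℂ) (b₀ b₁ : Fin d)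
    (hv : v b₀ ≠ 0 ∨ v b₁ ≠ 0) (c : Fin n → ℝ) (hc : ∀ ξ, 0 ≤ c ξ)
    (σ : Fin n → Matrix (Fin d) (Fin d) ℂ) (hσ : ∀ ξ, (σ ξ).PosSemidef)
    (h : proj v = ∑ ξ, (c ξ : ℂ) • σ ξ) :
    ∃ ξ, (σ ξ b₀ b₀ ≠ 0 ∨ σ ξ b₁ b₁ ≠ 0) ∧
      ∀ b, σ ξ b b₀ * (starRingEnd ℂ) (v b₁) - σ ξ b b₁ * (starRingEnd ℂ) (v b₀) = 0 := by
  obtain ⟨ξ, hcξ, hd⟩ : ∃ ξ, c ξ ≠ 0 ∧ (σ ξ b₀ b₀ ≠ 0 ∨ σ ξ b₁ b₁ ≠ 0) := by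
    by_contra! hcon
    have hz : ∀ b, (b = b₀ ∨ b = b₁) → v b = 0 := by
      intro b hb
      have e := congrFun (congrFun h b) b
      simp only [proj, Matrix.of_apply, Matrix.sum_apply, Matrix.smul_apply, smul_eq_mul] at e
      rw [Finset.sum_eq_zero] at e
      · simpa using e
      · intro ξ _
        by_cases hξ : c ξ = 0
        · simp [hξ]
        · rcases hb with rfl | rfl
          · simp [(hcon ξ hξ).1]
          · simp [(hcon ξ hξ).2]
    exact hv.elim (fun h => h (hz _ (.inl rfl))) (fun h => h (hz _ (.inr rfl)))
  refine ⟨ξ, hd, ?_⟩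
  set w : Fin d → ℂ := (starRingEnd ℂ) (v b₁) • Pi.single b₀ 1
    - (starRingEnd ℂ) (v b₀) • Pi.single b₁ 1 with hw
  have hproj : (proj v).mulVec w = 0 := by
    funext b
    simp [hw, proj, Matrix.mulVec_sub, Matrix.mulVec_smul]
    ring
  have hsum : ∑ ξ, (c ξ : ℂ) * (star w ⬝ᵥ (σ ξ).mulVec w) = 0 := by
    have e := congrArg (fun M => star w ⬝ᵥ Matrix.mulVec M w) h
    simp only [hproj, dotProduct_zero, Matrix.sum_mulVec, dotProduct_sum, Matrix.smul_mulVec,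
      dotProduct_smul, smul_eq_mul] at e
    exact e.symm
  have hterm := (Finset.sum_eq_zero_iff_of_nonneg (fun ξ _ =>
    mul_nonneg (by exact_mod_cast hc ξ) ((hσ ξ).dotProduct_mulVec_nonneg w))).mp hsum ξ
      (Finset.mem_univ _)
  have hker : (σ ξ).mulVec w = 0 :=
    ((hσ ξ).dotProduct_mulVec_zero_iff w).mp
      ((mul_eq_zero.mp hterm).resolve_left (by exact_mod_cast hcξ))
  intro b
  have e := congrFun hker b
  simp [hw, Matrix.mulVec_sub, Matrix.mulVec_smul] at e
  linear_combination e

/-- every pure bipartite state that is not a product state is steerable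
from Alice's side for non-degenerate projective measurements. -/
theorem stmt17 {dA dB : ℕ} (hdA : 2 ≤ dA) (hdB : 2 ≤ dB)
    (Ψ : Fin dA × Fin dB → ℂ) (hΨ : IsUnitVec Ψ)
    (hprod : ∀ (α : Fin dA → ℂ) (β : Fin dB → ℂ), Ψ ≠ tensor2 α β) :
    ¬ Unsteerable (proj Ψ) := by
  rintro ⟨n, P, σ, hP, -, hσ, hmodel⟩
  obtain ⟨a₁, a₂, b₀, b₁, hD⟩ := exists_minor_ne_zero Ψ hprod
  have key : ∀ t : ℕ, ∃ ξ, (σ ξ b₀ b₀ ≠ 0 ∨ σ ξ b₁ b₁ ≠ 0) ∧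
      ∀ b, σ ξ b b₀ * (starRingEnd ℂ) (Ψ (a₁, b₁) + t * Ψ (a₂, b₁))
        - σ ξ b b₁ * (starRingEnd ℂ) (Ψ (a₁, b₀) + t * Ψ (a₂, b₀)) = 0 := by
    intro t
    set β : EuclideanSpace ℂ (Fin dA) :=
      EuclideanSpace.single a₁ 1 + (t : ℂ) • EuclideanSpace.single a₂ 1 with hβ
    have hβv : ∀ b, ∑ a, (starRingEnd ℂ) (β a) * Ψ (a, b) = Ψ (a₁, b) + t * Ψ (a₂, b) := by
      intro b
      simp [hβ, add_mul, Finset.sum_add_distrib,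
        apply_ite (starRingEnd ℂ)]
    -- Otherwise both columns of the minor would satisfy the same linear relation.
    have hne : Ψ (a₁, b₀) + t * Ψ (a₂, b₀) ≠ 0 ∨ Ψ (a₁, b₁) + t * Ψ (a₂, b₁) ≠ 0 := by
      by_contra! hcon
      exact hD (by linear_combination Ψ (a₂, b₁) * hcon.1 - Ψ (a₂, b₀) * hcon.2)
    have hβ0 : β ≠ 0 := by
      intro h0
      rw [← hβv, ← hβv, h0] at hne
      simp at hne
    have hr : ‖β‖ ≠ 0 := norm_ne_zero_iff.mpr hβ0
    have hrC : ((‖β‖ : ℝ) : ℂ) ≠ 0 := by exact_mod_cast hr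
    obtain ⟨α, hα, hαβ⟩ := exists_orthonormalFam a₁ (((‖β‖ : ℝ) : ℂ)⁻¹ • β)
      (norm_smul_inv_norm hβ0)
    obtain ⟨Q, hQ, -, hcond⟩ := hmodel α hα
    have hv : ∀ b, contract (α a₁) Ψ b = ((‖β‖ : ℝ) : ℂ)⁻¹ * (Ψ (a₁, b) + t * Ψ (a₂, b)) := by
      intro b
      rw [← hβv, Finset.mul_sum]
      refine Finset.sum_congr rfl fun a _ => ?_
      simp [hαβ, mul_assoc]
    have e := hcond a₁
    rw [condState_proj] at e
    obtain ⟨ξ, hd, hrel⟩ := exists_hidden_state (contract (α a₁) Ψ) b₀ b₁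
      (by simpa only [hv, mul_ne_zero_iff, ne_eq, inv_eq_zero, hrC, not_false_eq_true, true_and]
        using hne)
      (fun ξ => Q a₁ ξ * P ξ) (fun ξ => mul_nonneg (hQ a₁ ξ).1 (hP ξ)) σ (fun ξ => (hσ ξ).1) e
    refine ⟨ξ, hd, fun b => ?_⟩
    have e := hrel b
    simp only [hv, map_mul, map_inv₀, Complex.conj_ofReal] at e
    field_simp at e
    linear_combination e
  choose f hf hrel using key
  obtain ⟨t, s, hts, hfe⟩ := Finite.exists_ne_map_eq_of_infinite f
  have htsC : (s : ℂ) - t ≠ 0 := sub_ne_zero.mpr (by exact_mod_cast hts.symm)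
  have hD' : (starRingEnd ℂ) (Ψ (a₁, b₀) * Ψ (a₂, b₁) - Ψ (a₁, b₁) * Ψ (a₂, b₀)) ≠ 0 := by
    simpa only [ne_eq, map_eq_zero] using hD
  -- The two relations have determinant `(s - t) * conj D`, up to sign, with `D` the minor.
  have hcol : ∀ b, σ (f t) b b₀ = 0 ∧ σ (f t) b b₁ = 0 := by
    intro b
    have h1 := hrel t b
    have h2 := hrel s b
    rw [← hfe] at h2
    simp only [map_add, map_mul, map_natCast] at h1 h2
    simp only [map_sub, map_mul] at hD'
    constructor
    · refine (mul_eq_zero.mp ?_).resolve_left (mul_ne_zero htsC hD')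
      linear_combination
        ((starRingEnd ℂ) (Ψ (a₁, b₀)) + t * (starRingEnd ℂ) (Ψ (a₂, b₀))) * h2
        - ((starRingEnd ℂ) (Ψ (a₁, b₀)) + s * (starRingEnd ℂ) (Ψ (a₂, b₀))) * h1
    · refine (mul_eq_zero.mp ?_).resolve_left (mul_ne_zero htsC hD')
      linear_combination
        ((starRingEnd ℂ) (Ψ (a₁, b₁)) + t * (starRingEnd ℂ) (Ψ (a₂, b₁))) * h2
        - ((starRingEnd ℂ) (Ψ (a₁, b₁)) + s * (starRingEnd ℂ) (Ψ (a₂, b₁))) * h1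
  exact (hf t).elim (fun h => h (hcol b₀).1) (fun h => h (hcol b₁).2)

end

end EPR
end
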